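/- The generating function V_3(x) for vicious 3-watermelons, as a formal power series with V_3(0) = 1, satisfies the linear differential equation x^2(1+x)(1-8x) V_3'' + x(8 - 42x - 32x^2) V_3' + (12 - 40x - 16x^2) V_3 = 12. -/

import Mathlib

/-- A directed walk of length `n`, encoded by its ordinates, frozen after time `n`. -/
def IsWalkTo (n : ℕ) (y : ℕ → ℤ) : Prop :=
  (∀ t < n, y (t + 1) = y t + 1 ∨ y (t + 1) = y t - 1) ∧ (∀ t, n ≤ t → y t = y n)

/-- A vicious `p`-watermelon of length `n`: walks start at heights `0,2,…,2(p-1)`,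
end at heights `c, c+2, …, c+2(p-1)` for some `c`, with strict ordering at every time. -/
def Vicious (p n : ℕ) (y : Fin p → ℕ → ℤ) : Prop :=
  (∀ k, IsWalkTo n (y k)) ∧
  (∀ k : Fin p, y k 0 = 2 * ((k : ℕ) : ℤ)) ∧
  (∃ c : ℤ, ∀ k : Fin p, y k n = c + 2 * ((k : ℕ) : ℤ)) ∧
  (∀ t ≤ n, ∀ j k : Fin p, j < k → y j t < y k t)

/-- A super friendly `p`-watermelon of length `n`: all walks start at the origin,
all end at the same point, with weak ordering at every time. -/
def SuperFriendly (p n : ℕ) (y : Fin p → ℕ → ℤ) : Prop :=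
  (∀ k, IsWalkTo n (y k)) ∧
  (∀ k, y k 0 = 0) ∧
  (∀ j k : Fin p, y j n = y k n) ∧
  (∀ t ≤ n, ∀ j k : Fin p, j ≤ k → y j t ≤ y k t)

open PowerSeries

/-!
The Lindström–Gessel–Viennot determinant of walk counts satisfies the same first-step recursion as
the number of vicious families: the choices of first steps that lead to a collision give two equal
rows. For starts and ends two apart, multiplication by a unipotent Pascal matrix turns it into
`det [C(n + j, k + i)]`, which is a Vandermonde determinant up to row and column factors. The
resulting product formula (MacMahon's box formula) shows that vicious `3`-watermelons are counted by
the Baxter numbers. Zeilberger's algorithm gives their second-order recurrence, and the recurrence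
is the differential equation, because a Cauchy–Euler operator acts diagonally on powers of `x`.
-/

/-! ### Walk counts -/

/-- The number of `±1` walks with `n` steps and total displacement `d`, computed by removing one
step. -/
def walkCount : ℕ → ℤ → ℤ
  | 0, d => if d = 0 then 1 else 0
  | n + 1, d => ∑ s : ℤˣ, walkCount n (d - s)

theorem walkCount_succ (n : ℕ) (d : ℤ) :
    walkCount (n + 1) d = walkCount n (d - 1) + walkCount n (d + 1) := by
  simp [walkCount, UnitsInt.univ]

theorem walkCount_eq_zero_of_lt {n : ℕ} {d : ℤ} (h : d < -n) : walkCount n d = 0 := by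
  induction n generalizing d with
  | zero => exact if_neg (by simpa using h.ne)
  | succ n ih =>
    push_cast at h
    rw [walkCount_succ, ih (by lia), ih (by lia), add_zero]

theorem walkCount_two_mul_sub (n k : ℕ) : walkCount n (2 * k - n) = n.choose k := by
  induction n generalizing k with
  | zero => cases k <;> simp [walkCount]; lia
  | succ n ih =>
    rw [walkCount_succ]
    cases k with
    | zero =>
      rw [walkCount_eq_zero_of_lt (by push_cast; lia), zero_add]
      convert ih 0 using 2 <;> simp
    | succ k =>
      rw [Nat.choose_succ_succ', Nat.cast_add (n.choose k), ← ih k, ← ih (k + 1)]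
      congr 2 <;> push_cast <;> ring

theorem walkCount_add (n m : ℕ) (d : ℤ) :
    walkCount (n + m) d =
      ∑ ij ∈ Finset.HasAntidiagonal.antidiagonal m,
        m.choose ij.1 * walkCount n (d + ij.2 - ij.1) := by
  induction m generalizing d with
  | zero => simp
  | succ m ih =>
    rw [Finset.sum_antidiagonal_choose_succ_mul fun i j => walkCount n (d + j - i),
      ← add_assoc, walkCount_succ, add_comm, ih, ih]
    congr 1 <;> refine Finset.sum_congr rfl fun ij hij => ?_
    · congr 2; push_cast; ring
    · rw [Nat.choose_symm_of_eq_add (Finset.HasAntidiagonal.mem_antidiagonal.1 hij).symm]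
      congr 2; push_cast; ring

theorem walkCount_add_eq_sum_range {m p : ℕ} (h : m < p) (n : ℕ) (d : ℤ) :
    walkCount (n + m) d = ∑ l ∈ Finset.range p, m.choose l * walkCount n (d + m - 2 * l) := by
  rw [walkCount_add, Finset.Nat.sum_antidiagonal_eq_sum_range_succ_mk]
  refine Finset.sum_subset_zero_on_sdiff (Finset.range_subset_range.2 h) (fun l hl => ?_)
    fun l hl => ?_
  · have hml : m < l := by simpa using (Finset.mem_sdiff.1 hl).2
    simp [Nat.choose_eq_zero_of_lt hml]
  · rw [Nat.cast_sub (Finset.mem_range_succ_iff.1 hl)]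
    congr 2
    ring

theorem isWalkTo_zero_iff {y : ℕ → ℤ} : IsWalkTo 0 y ↔ ∀ t, y t = y 0 := by
  simp [IsWalkTo]

theorem isWalkTo_succ_iff {n : ℕ} {y : ℕ → ℤ} :
    IsWalkTo (n + 1) y ↔ (∃ s : ℤˣ, y 1 = y 0 + s) ∧ IsWalkTo n fun t => y (t + 1) := by
  have hstep : (∃ s : ℤˣ, y 1 = y 0 + s) ↔ y 1 = y 0 + 1 ∨ y 1 = y 0 - 1 := by
    constructor
    · rintro ⟨s, hs⟩
      rcases Int.units_eq_one_or s with rfl | rfl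
      exacts [.inl hs, .inr hs]
    · rintro (h | h)
      exacts [⟨1, h⟩, ⟨-1, h⟩]
  have hfrozen : (∀ t, n + 1 ≤ t → y t = y (n + 1)) ↔ ∀ t, n ≤ t → y (t + 1) = y (n + 1) :=
    ⟨fun h t ht => h (t + 1) (Nat.succ_le_succ ht), fun h t ht => by
      obtain ⟨t, rfl⟩ := Nat.exists_eq_succ_of_ne_zero (Nat.ne_zero_of_lt ht)
      exact h t (Nat.succ_le_succ_iff.1 ht)⟩
  rw [hstep, IsWalkTo, IsWalkTo, Nat.forall_lt_succ_left, hfrozen, and_assoc]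

theorem IsWalkTo.exists_upSteps {n : ℕ} {y : ℕ → ℤ} (h : IsWalkTo n y) :
    ∃ k ≤ n, y n = y 0 + 2 * k - n := by
  induction n generalizing y with
  | zero => exact ⟨0, le_rfl, by simp⟩
  | succ n ih =>
    obtain ⟨⟨s, hs⟩, htail⟩ := isWalkTo_succ_iff.1 h
    obtain ⟨k, hk, hy⟩ := ih htail
    rcases Int.units_eq_one_or s with rfl | rfl
    · exact ⟨k + 1, by lia, by push_cast at *; lia⟩
    · exact ⟨k, by lia, by push_cast at *; lia⟩

/-! ### Vicious families -/

section ViciousFamilies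

variable {ι : Type*}

/-- A family of non-intersecting walks of length `n` indexed by `ι`, the `k`-th of them leading
from height `a k` to height `e k`. -/
structure IsVicious [Preorder ι] (n : ℕ) (a e : ι → ℤ) (y : ι → ℕ → ℤ) : Prop where
  isWalkTo (k : ι) : IsWalkTo n (y k)
  start (k : ι) : y k 0 = a k
  finish (k : ι) : y k n = e k
  strictMono (t : ℕ) (ht : t ≤ n) : StrictMono fun k => y k t

/-- The family of sequences `y` preceded by the values `a` at time `0`. -/
def consWalk (a : ι → ℤ) (y : ι → ℕ → ℤ) : ι → ℕ → ℤ
  | k, 0 => a k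
  | k, t + 1 => y k t

theorem consWalk_injective (a : ι → ℤ) : Function.Injective (consWalk a) := fun _ _ h =>
  funext₂ fun k t => congrFun₂ h k (t + 1)

section Preorder

variable [Preorder ι] {n : ℕ} {a e : ι → ℤ} {y : ι → ℕ → ℤ}

theorem IsVicious.strictMono_start (h : IsVicious n a e y) : StrictMono a := by
  simpa only [h.start] using h.strictMono 0 n.zero_le

theorem isVicious_zero_iff : IsVicious 0 a e y ↔ StrictMono a ∧ a = e ∧ y = fun k _ => a k := by
  constructor
  · intro h
    refine ⟨h.strictMono_start, funext fun k => ?_, funext₂ fun k t => ?_⟩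
    · rw [← h.start, h.finish]
    · rw [isWalkTo_zero_iff.1 (h.isWalkTo k), h.start]
  · rintro ⟨ha, rfl, rfl⟩
    exact
      ⟨fun _ => isWalkTo_zero_iff.2 fun _ => rfl, fun _ => rfl, fun _ => rfl, fun _ _ => ha⟩

theorem IsVicious.cons (ha : StrictMono a) {s : ι → ℤˣ}
    (h : IsVicious n (fun k => a k + s k) e y) : IsVicious (n + 1) a e (consWalk a y) where
  isWalkTo k := isWalkTo_succ_iff.2 ⟨⟨s k, h.start k⟩, h.isWalkTo k⟩
  start _ := rfl
  finish := h.finish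
  strictMono
    | 0, _ => ha
    | t + 1, ht => h.strictMono t (Nat.succ_le_succ_iff.1 ht)

theorem IsVicious.exists_eq_consWalk (h : IsVicious (n + 1) a e y) :
    ∃ (s : ι → ℤˣ) (z : ι → ℕ → ℤ),
      IsVicious n (fun k => a k + s k) e z ∧ consWalk a z = y := by
  have hstep k := isWalkTo_succ_iff.1 (h.isWalkTo k)
  choose s hs using fun k => (hstep k).1
  refine ⟨s, fun k t => y k (t + 1), ⟨fun k => (hstep k).2, fun k => ?_, h.finish, ?_⟩, ?_⟩
  · rw [zero_add, hs, h.start]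
  · exact fun t ht => h.strictMono (t + 1) (Nat.succ_le_succ ht)
  · funext k t
    cases t with
    | zero => exact (h.start k).symm
    | succ t => rfl

/-- A vicious family is decomposed into its first steps and the remaining vicious family. -/
noncomputable def viciousSuccEquiv (ha : StrictMono a) :
    (Σ s : ι → ℤˣ, {y // IsVicious n (fun k => a k + s k) e y}) ≃
      {y // IsVicious (n + 1) a e y} :=
  .ofBijective (fun z => ⟨consWalk a z.2, z.2.2.cons ha⟩) <| by
    constructor
    · rintro ⟨s, y, hy⟩ ⟨s', y', hy'⟩ h
      obtain rfl : y = y' := consWalk_injective a (congrArg Subtype.val h)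
      obtain rfl : s = s' := funext fun k =>
        Units.ext (add_left_cancel ((hy.start k).symm.trans (hy'.start k)))
      rfl
    · rintro ⟨y, hy⟩
      obtain ⟨s, z, hz, rfl⟩ := hy.exists_eq_consWalk
      exact ⟨⟨s, z, hz⟩, rfl⟩

/-- The number of vicious families of length `n` from `a` to `e`. -/
noncomputable def viciousCount (n : ℕ) (a e : ι → ℤ) : ℕ :=
  Nat.card {y // IsVicious n a e y}

theorem viciousCount_eq_zero (ha : ¬ StrictMono a) : viciousCount n a e = 0 :=
  have : IsEmpty {y // IsVicious n a e y} := ⟨fun y => ha y.2.strictMono_start⟩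
  Nat.card_of_isEmpty

theorem viciousCount_zero [Decidable (a = e)] (ha : StrictMono a) :
    viciousCount 0 a e = if a = e then 1 else 0 := by
  simp only [viciousCount, isVicious_zero_iff, ha, true_and]
  split_ifs with h <;> simp [h]

instance IsVicious.finite [Finite ι] (n : ℕ) (a e : ι → ℤ) : Finite {y // IsVicious n a e y} := by
  induction n generalizing a with
  | zero =>
    exact ((Set.finite_singleton fun k _ => a k).subset
      fun y hy => (isVicious_zero_iff.1 hy).2.2).to_subtype
  | succ n ih =>
    by_cases ha : StrictMono a
    · exact .of_equiv _ (viciousSuccEquiv ha)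
    · have : IsEmpty {y // IsVicious (n + 1) a e y} := ⟨fun y => ha y.2.strictMono_start⟩
      infer_instance

end Preorder

section Fintype

variable [Fintype ι]

theorem viciousCount_succ [Preorder ι] [DecidableEq ι] {n : ℕ} {a e : ι → ℤ} (ha : StrictMono a) :
    viciousCount (n + 1) a e = ∑ s : ι → ℤˣ, viciousCount n (fun k => a k + s k) e := by
  rw [viciousCount, ← Nat.card_congr (viciousSuccEquiv ha), Nat.card_sigma]
  rfl

/-! ### The Lindström–Gessel–Viennot determinant -/

/-- The Lindström–Gessel–Viennot matrix, whose `(j, k)` entry counts all walks of length `n` from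
`a j` to `e k`. -/
def walkMatrix (n : ℕ) (a e : ι → ℤ) : Matrix ι ι ℤ :=
  .of fun j k => walkCount n (e k - a j)

theorem det_walkMatrix_succ [DecidableEq ι] (n : ℕ) (a e : ι → ℤ) :
    (walkMatrix (n + 1) a e).det = ∑ s : ι → ℤˣ, (walkMatrix n (fun k => a k + s k) e).det := by
  have h := (Matrix.detRowAlternating (n := ι) (R := ℤ)).toMultilinearMap.map_sum
    fun j (s : ℤˣ) k => walkCount n (e k - (a j + s))
  refine .trans (congrArg Matrix.det ?_) h
  ext j k
  simp [walkMatrix, walkCount, sub_sub]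

theorem det_of_ite_eq [LinearOrder ι] {R α : Type*} [CommRing R] [Preorder α]
    [DecidableEq α] {a e : ι → α} (ha : StrictMono a) (he : StrictMono e) :
    (Matrix.of fun j k => if e k = a j then (1 : R) else 0).det = if a = e then 1 else 0 := by
  split_ifs with hae
  · subst hae
    convert Matrix.det_one (n := ι) (R := R) using 2
    ext j k
    simp [Matrix.one_apply, ha.injective.eq_iff, eq_comm]
  · obtain ⟨j, hj⟩ : ∃ j, ∀ k, e k ≠ a j := by
      by_contra! hsub
      refine hae ((ha.range_inj he).1 (Set.eq_of_subset_of_ncard_le ?_ ?_))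
      · rintro _ ⟨j, rfl⟩
        exact hsub j
      · simp [Set.ncard_range_of_injective, ha.injective, he.injective]
    exact Matrix.det_eq_zero_of_row_eq_zero j fun k => if_neg (hj k)

theorem det_walkMatrix_eq_zero [DecidableEq ι] {n : ℕ} {a e : ι → ℤ} (ha : ¬ a.Injective) :
    (walkMatrix n a e).det = 0 := by
  obtain ⟨i, j, hij, hne⟩ := Function.not_injective_iff.1 ha
  exact Matrix.det_zero_of_row_eq hne (by ext; simp [walkMatrix, hij])

theorem odd_coe_units (s : ℤˣ) : Odd (s : ℤ) := by
  obtain rfl | rfl := Int.units_eq_one_or s <;> decide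

theorem even_add_units_sub_add_units {a b : ℤ} (h : Even (b - a)) (s t : ℤˣ) :
    Even (b + t - (a + s)) := by
  rw [add_sub_add_comm]
  exact h.add ((odd_coe_units t).sub_odd (odd_coe_units s))

theorem add_units_le_add_units {a b : ℤ} (hlt : a < b) (h : Even (b - a)) (s t : ℤˣ) :
    a + s ≤ b + t := by
  obtain ⟨m, hm⟩ := h
  obtain rfl | rfl := Int.units_eq_one_or s <;> obtain rfl | rfl := Int.units_eq_one_or t <;>
    push_cast <;> lia

/-- Walkers at distinct heights of equal parity cannot pass each other in one step, so a
collision is detected by two equal rows of the walk matrix: this is why the determinant satisfies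
the same recursion as the number of vicious families. -/
theorem viciousCount_eq_det [LinearOrder ι] {n : ℕ} {a e : ι → ℤ} (ha : StrictMono a)
    (hpar : ∀ j k, Even (a k - a j)) (he : StrictMono e) :
    (viciousCount n a e : ℤ) = (walkMatrix n a e).det := by
  induction n generalizing a with
  | zero =>
    rw [viciousCount_zero ha, Nat.cast_ite, Nat.cast_one, Nat.cast_zero]
    convert (det_of_ite_eq ha he).symm using 2
    simp only [walkMatrix, walkCount, sub_eq_zero]
  | succ n ih =>
    rw [viciousCount_succ ha, det_walkMatrix_succ, Nat.cast_sum]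
    refine Finset.sum_congr rfl fun s _ => ?_
    by_cases hs : StrictMono fun k => a k + s k
    · exact ih hs fun j k => even_add_units_sub_add_units (hpar j k) (s j) (s k)
    · rw [viciousCount_eq_zero hs, Nat.cast_zero, det_walkMatrix_eq_zero]
      have hmono : Monotone fun k => a k + s k := monotone_iff_forall_lt.2 fun j k hjk =>
        add_units_le_add_units (ha hjk) (hpar j k) (s j) (s k)
      exact mt hmono.strictMono_of_injective hs

end Fintype

end ViciousFamilies

/-- The heights `c, c + 2, …, c + 2 (p - 1)` at which the walks of a watermelon start and end. -/
def ladder (p : ℕ) (c : ℤ) (k : Fin p) : ℤ :=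
  c + 2 * (k : ℕ)

theorem strictMono_ladder (p : ℕ) (c : ℤ) : StrictMono (ladder p c) := fun j k hjk => by
  simpa [ladder] using hjk

theorem even_ladder_sub_ladder (p : ℕ) (c : ℤ) (j k : Fin p) :
    Even (ladder p c k - ladder p c j) := by
  rw [ladder, ladder, add_sub_add_left_eq_sub]
  exact (even_two_mul _).sub (even_two_mul _)

theorem vicious_iff_exists_isVicious {p n : ℕ} {y : Fin p → ℕ → ℤ} :
    Vicious p n y ↔ ∃ c : ℤ, IsVicious n (ladder p 0) (ladder p c) y := by
  constructor
  · rintro ⟨hwalk, hstart, ⟨c, hfinish⟩, hmono⟩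
    exact ⟨c, hwalk, fun k => by rw [hstart, ladder, zero_add], hfinish, hmono⟩
  · rintro ⟨c, h⟩
    exact ⟨h.isWalkTo, fun k => by rw [h.start, ladder, zero_add], ⟨c, h.finish⟩, h.strictMono⟩

/-! ### Determinants of binomial coefficients -/

theorem choose_mul_descFactorial_sub (N m r : ℕ) :
    N.choose m * (N - m).descFactorial r = N.descFactorial r * (N - r).choose m := by
  apply Nat.eq_of_mul_eq_mul_left m.factorial_pos
  calc
    m.factorial * (N.choose m * (N - m).descFactorial r)
      = (N - m).descFactorial r * N.descFactorial m := by
        rw [Nat.descFactorial_eq_factorial_mul_choose N m]; ring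
    _ = N.descFactorial (m + r) := by
        simpa using Nat.descFactorial_mul_descFactorial (n := N) (Nat.le_add_right m r)
    _ = (N - r).descFactorial m * N.descFactorial r := by
        simpa using (Nat.descFactorial_mul_descFactorial (n := N) (Nat.le_add_left r m)).symm
    _ = m.factorial * (N.descFactorial r * (N - r).choose m) := by
        rw [Nat.descFactorial_eq_factorial_mul_choose (N - r) m]; ring

/-- For `N < m` the factor `N - m` is negative, but then both binomial coefficients vanish. -/
theorem choose_mul_eval_descPochhammer (R : Type*) [CommRing R] (N m r : ℕ) :
    (N.choose m : R) * (descPochhammer R r).eval (N - m : R) =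
      N.descFactorial r * (N - r).choose m := by
  obtain hm | hm := le_or_gt m N
  · rw [← Nat.cast_sub hm, descPochhammer_eval_eq_descFactorial]
    exact_mod_cast congrArg (Nat.cast (R := R)) (choose_mul_descFactorial_sub N m r)
  · simp [Nat.choose_eq_zero_of_lt hm, Nat.choose_eq_zero_of_lt ((N.sub_le r).trans_lt hm)]

theorem superFactorial_ne_zero (n : ℕ) : n.superFactorial ≠ 0 := by
  rw [← Nat.prod_range_succ_factorial]
  exact Finset.prod_ne_zero_iff.2 fun r _ => r.factorial_ne_zero

theorem det_eval_descPochhammer (R : Type*) [CommRing R] [IsDomain R] (x : R) (p : ℕ) :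
    (Matrix.of fun r i : Fin (p + 1) => (descPochhammer R r).eval (i + x)).det =
      p.superFactorial := by
  rw [← Matrix.det_vandermonde_id_eq_superFactorial, ← Matrix.det_vandermonde_add _ x,
    Matrix.det_eval_matrixOfPolynomials_eq_det_vandermonde _ (fun r => descPochhammer R r)
      (fun r => descPochhammer_natDegree R r) (fun r => monic_descPochhammer R r),
    ← Matrix.det_transpose]
  rfl

theorem prod_descFactorial (N p : ℕ) :
    ∏ r ∈ Finset.range (p + 1), N.descFactorial r =
      p.superFactorial * ∏ r ∈ Finset.range (p + 1), N.choose r := by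
  simp only [Nat.descFactorial_eq_factorial_mul_choose, Finset.prod_mul_distrib,
    Nat.prod_range_succ_factorial]

theorem prod_choose_mul_det_choose (n k p : ℕ) :
    (∏ r ∈ Finset.range (p + 1), ((n + p).choose r : ℤ)) *
        (Matrix.of fun j i : Fin (p + 1) => ((n + j : ℕ).choose (k + i) : ℤ)).det =
      ∏ i ∈ Finset.range (p + 1), ((n + p).choose (k + i) : ℤ) := by
  set M := Matrix.of fun j i : Fin (p + 1) => ((n + j : ℕ).choose (k + i) : ℤ)
  -- Reversing both indices, row `r` consists of values of a polynomial of degree `r`.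
  have hentry (r i : Fin (p + 1)) :
      ((n + p).descFactorial r : ℤ) * M.submatrix Fin.revPerm Fin.revPerm r i =
        (n + p).choose (k + i.rev) * (descPochhammer ℤ r).eval (i + (n - k : ℤ)) := by
    have hrow : n + (r.rev : ℕ) = n + p - r := by have := r.is_le; rw [Fin.val_rev]; lia
    have hcol : (i + (n - k) : ℤ) = (n + p : ℕ) - (k + i.rev : ℕ) := by
      have := i.is_le; rw [Fin.val_rev]; lia
    rw [hcol, choose_mul_eval_descPochhammer, ← hrow]
    rfl
  have hdet : (∏ r : Fin (p + 1), ((n + p).descFactorial r : ℤ)) * M.det =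
      (∏ i : Fin (p + 1), ((n + p).choose (k + i) : ℤ)) * p.superFactorial := by
    rw [← det_eval_descPochhammer ℤ (n - k),
      ← Equiv.prod_comp Fin.revPerm fun i : Fin (p + 1) => ((n + p).choose (k + i) : ℤ),
      ← Matrix.det_submatrix_equiv_self Fin.revPerm M, ← Matrix.det_mul_column,
      ← Matrix.det_mul_row]
    exact congrArg Matrix.det (Matrix.ext hentry)
  rw [Fin.prod_univ_eq_prod_range fun r => ((n + p).descFactorial r : ℤ),
    Fin.prod_univ_eq_prod_range fun i => ((n + p).choose (k + i) : ℤ), ← Nat.cast_prod,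
    prod_descFactorial, Nat.cast_mul, mul_assoc, mul_comm _ (p.superFactorial : ℤ)] at hdet
  exact_mod_cast mul_left_cancel₀ (Nat.cast_ne_zero.2 (superFactorial_ne_zero p)) hdet

theorem det_walkMatrix_eq_det_choose (p n k : ℕ) :
    (walkMatrix n (ladder p 0) (ladder p (2 * k - n))).det =
      (Matrix.of fun j i : Fin p => ((n + j : ℕ).choose (k + i) : ℤ)).det := by
  let P : Matrix (Fin p) (Fin p) ℤ := .of fun j l => (j : ℕ).choose l
  have hP : P.det = 1 := by
    rw [Matrix.det_of_isLowerTriangular]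
    · simp [P]
    · intro j l hjl
      exact Nat.cast_eq_zero.2 (Nat.choose_eq_zero_of_lt (OrderDual.toDual_lt_toDual.1 hjl))
  have hmul : P * walkMatrix n (ladder p 0) (ladder p (2 * k - n)) =
      Matrix.of fun j i : Fin p => ((n + j : ℕ).choose (k + i) : ℤ) := by
    ext j i
    rw [Matrix.of_apply, ← walkCount_two_mul_sub, walkCount_add_eq_sum_range j.is_lt,
      ← Fin.sum_univ_eq_sum_range, Matrix.mul_apply]
    refine Finset.sum_congr rfl fun l _ => ?_
    simp only [P, walkMatrix, ladder, Matrix.of_apply]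
    congr 2
    push_cast
    ring
  rw [← hmul, Matrix.det_mul, hP, one_mul]

/-! ### The number of watermelons -/

/-- MacMahon's box formula in terms of vicious families: the quotient of the two products counts
the plane partitions in a `(p + 1) × k × (n - k)` box. -/
theorem prod_choose_mul_viciousCount (p n k : ℕ) :
    (∏ r ∈ Finset.range (p + 1), (n + p).choose r) *
        viciousCount n (ladder (p + 1) 0) (ladder (p + 1) (2 * k - n)) =
      ∏ i ∈ Finset.range (p + 1), (n + p).choose (k + i) := by
  rw [← Nat.cast_inj (R := ℤ), Nat.cast_mul, Nat.cast_prod, Nat.cast_prod,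
    viciousCount_eq_det (strictMono_ladder _ _) (even_ladder_sub_ladder _ _)
      (strictMono_ladder _ _),
    det_walkMatrix_eq_det_choose, prod_choose_mul_det_choose]

theorem card_vicious_eq_sum_viciousCount (p n : ℕ) :
    Nat.card {y : Fin (p + 1) → ℕ → ℤ // Vicious (p + 1) n y} =
      ∑ k ∈ Finset.range (n + 1),
        viciousCount n (ladder (p + 1) 0) (ladder (p + 1) (2 * k - n)) := by
  let f : (Σ k : Fin (n + 1),
        {y // IsVicious n (ladder (p + 1) 0) (ladder (p + 1) (2 * (k : ℕ) - n)) y}) →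
      {y : Fin (p + 1) → ℕ → ℤ // Vicious (p + 1) n y} := fun y =>
    ⟨y.2, vicious_iff_exists_isVicious.2 ⟨_, y.2.2⟩⟩
  have hf : f.Bijective := by
    constructor
    · rintro ⟨k, y, hy⟩ ⟨k', y', hy'⟩ h
      obtain rfl : y = y' := congrArg Subtype.val h
      obtain rfl : k = k' := by
        have hfinish := (hy.finish 0).symm.trans (hy'.finish 0)
        simp only [ladder] at hfinish
        exact Fin.ext (by lia)
      rfl
    · rintro ⟨y, hy⟩
      obtain ⟨c, hc⟩ := vicious_iff_exists_isVicious.1 hy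
      obtain ⟨k, hk, hyk⟩ := (hc.isWalkTo 0).exists_upSteps
      obtain rfl : c = 2 * k - n := by
        have hstart := hc.start 0
        have hfinish := hc.finish 0
        simp only [ladder, Fin.val_zero] at hstart hfinish
        lia
      exact ⟨⟨⟨k, Nat.lt_succ_of_le hk⟩, y, hc⟩, rfl⟩
  rw [← Nat.card_congr (.ofBijective f hf), Nat.card_sigma, Finset.sum_range]
  rfl

theorem card_vicious_eq_sum_prod (p n : ℕ) :
    (Nat.card {y : Fin (p + 1) → ℕ → ℤ // Vicious (p + 1) n y} : ℚ) =
      ∑ k ∈ Finset.range (n + 1),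
        ∏ i ∈ Finset.range (p + 1), ((n + p).choose (k + i) / (n + p).choose i : ℚ) := by
  rw [card_vicious_eq_sum_viciousCount, Nat.cast_sum]
  refine Finset.sum_congr rfl fun k _ => ?_
  have hne : ∏ r ∈ Finset.range (p + 1), ((n + p).choose r : ℚ) ≠ 0 :=
    Finset.prod_ne_zero_iff.2 fun r hr => Nat.cast_ne_zero.2 (Nat.choose_pos (by grind)).ne'
  rw [Finset.prod_div_distrib, eq_div_iff hne, mul_comm]
  exact_mod_cast prod_choose_mul_viciousCount p n k

/-! ### Baxter numbers -/

theorem choose_succ_mul_cast (R : Type*) [CommRing R] (n k : ℕ) :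
    (n.choose (k + 1) : R) * (k + 1) = n.choose k * (n - k) := by
  obtain h | h := le_or_gt k n
  · rw [← Nat.cast_sub h]
    exact_mod_cast congrArg (Nat.cast (R := R)) (n.choose_succ_right_eq k)
  · simp [Nat.choose_eq_zero_of_lt h, Nat.choose_eq_zero_of_lt (h.trans k.lt_succ_self)]

theorem succ_choose_mul_cast (R : Type*) [CommRing R] (n k : ℕ) :
    ((n + 1).choose k : R) * (n + 1 - k) = n.choose k * (n + 1) := by
  simpa [mul_comm] using choose_mul_eval_descPochhammer R (n + 1) k 1

/-- The `k`-th summand of the classical formula for the Baxter number `B (n + 1)`, with `k` counted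
from `0`. -/
def baxterSummand (n k : ℕ) : ℚ :=
  (n + 2).choose k * (n + 2).choose (k + 1) * (n + 2).choose (k + 2) /
    ((n + 2).choose 1 * (n + 2).choose 2)

/-- The Baxter numbers `1, 2, 6, 22, …`, indexed such that `baxterNumber n` is `B (n + 1)` in the
usual notation. -/
def baxterNumber (n : ℕ) : ℚ :=
  ∑ k ∈ Finset.range (n + 1), baxterSummand n k

theorem baxterSummand_eq_zero {n k : ℕ} (h : n < k) : baxterSummand n k = 0 := by
  simp [baxterSummand, Nat.choose_eq_zero_of_lt (Nat.add_lt_add_right h 2)]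

theorem sum_range_baxterSummand {n N : ℕ} (h : n < N) :
    ∑ k ∈ Finset.range N, baxterSummand n k = baxterNumber n :=
  (Finset.sum_subset (Finset.range_subset_range.2 h) fun _ _ hk =>
    baxterSummand_eq_zero (by simpa using hk)).symm

theorem baxterSummand_eq_div (n k : ℕ) :
    baxterSummand n k =
      2 * ((n + 2).choose k * (n + 2).choose (k + 1) * (n + 2).choose (k + 2)) /
        ((n + 1) * (n + 2) ^ 2) := by
  have hn : (n + 2 - 1 : ℚ) = n + 1 := by ring
  rw [baxterSummand, Nat.choose_one_right, Nat.cast_choose_two, Nat.cast_add, Nat.cast_ofNat, hn]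
  field_simp

theorem baxterSummand_succ_right (n k : ℕ) :
    baxterSummand n (k + 1) * ((k + 1) * (k + 2) * (k + 3)) =
      baxterSummand n k * ((n - k) * (n + 1 - k) * (n + 2 - k)) := by
  have h₀ := choose_succ_mul_cast ℚ (n + 2) k
  have h₁ := choose_succ_mul_cast ℚ (n + 2) (k + 1)
  have h₂ := choose_succ_mul_cast ℚ (n + 2) (k + 2)
  push_cast at h₀ h₁ h₂
  rw [← eq_div_iff (by positivity)] at h₀ h₁ h₂
  rw [baxterSummand, baxterSummand, add_assoc k 1 2, ← add_assoc k 2 1, h₂, h₁, h₀]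
  field_simp
  ring

theorem baxterSummand_succ_left (n k : ℕ) :
    baxterSummand (n + 1) k * ((n + 1 - k) * (n + 2 - k) * (n + 3 - k)) =
      baxterSummand n k * ((n + 1) * (n + 2) * (n + 3)) := by
  have h₀ := succ_choose_mul_cast ℚ (n + 2) k
  have h₁ := succ_choose_mul_cast ℚ (n + 2) (k + 1)
  have h₂ := succ_choose_mul_cast ℚ (n + 2) (k + 2)
  push_cast at h₀ h₁ h₂
  rw [baxterSummand_eq_div, baxterSummand_eq_div, add_right_comm n 1 2]
  push_cast
  calc
    _ = 2 * (((n + 2 + 1).choose k * (n + 2 + 1 - k)) *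
          ((n + 2 + 1).choose (k + 1) * (n + 2 + 1 - (k + 1))) *
          ((n + 2 + 1).choose (k + 2) * (n + 2 + 1 - (k + 2)))) /
        ((n + 1 + 1) * (n + 1 + 2) ^ 2 : ℚ) := by ring
    _ = _ := by
      rw [h₀, h₁, h₂]
      field_simp
      ring

/-- The telescoping companion of `baxterSummand` found by Zeilberger's algorithm. -/
def baxterCertificate (n k : ℕ) : ℚ :=
  baxterSummand (n + 2) k * (k * (k + 1) * (k + 2)) *
    (-(402 + 401 * n + 131 * n ^ 2 + 14 * n ^ 3) + (248 + 165 * n + 27 * n ^ 2) * k -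
      (54 + 18 * n) * k ^ 2 + 4 * k ^ 3) / ((n + 2) * (n + 3) ^ 2 * (n + 4))

theorem baxterCertificate_succ_sub (n k : ℕ) :
    baxterCertificate n (k + 1) - baxterCertificate n k =
      (n + 5) * (n + 6) * baxterSummand (n + 2) k -
        (7 * (n + 2) ^ 2 + 21 * (n + 2) + 12) * baxterSummand (n + 1) k -
        8 * (n + 2) * (n + 1) * baxterSummand n k := by
  have h₀ := baxterSummand_succ_left n k
  have h₁ := baxterSummand_succ_left (n + 1) k
  have h₂ := baxterSummand_succ_right (n + 2) k
  rw [eq_comm, ← eq_div_iff (by positivity)] at h₀ h₁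
  rw [← eq_div_iff (by positivity)] at h₂
  push_cast at h₁ h₂
  rw [baxterCertificate, baxterCertificate, h₂, h₀, h₁]
  push_cast
  field_simp
  ring

theorem baxterNumber_recurrence (n : ℕ) :
    (n + 5) * (n + 6) * baxterNumber (n + 2) =
      (7 * (n + 2) ^ 2 + 21 * (n + 2) + 12) * baxterNumber (n + 1) +
        8 * (n + 2) * (n + 1) * baxterNumber n := by
  have htelescope := Finset.sum_range_sub (baxterCertificate n) (n + 3)
  have hright : baxterCertificate n (n + 3) = 0 := by
    simp [baxterCertificate, baxterSummand_eq_zero (n + 2).lt_succ_self]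
  have hleft : baxterCertificate n 0 = 0 := by simp [baxterCertificate]
  simp only [baxterCertificate_succ_sub, hright, hleft, Finset.sum_sub_distrib, ← Finset.mul_sum,
    sum_range_baxterSummand (show n < n + 3 by lia),
    sum_range_baxterSummand (show n + 1 < n + 3 by lia),
    sum_range_baxterSummand (show n + 2 < n + 3 by lia)] at htelescope
  linear_combination htelescope

theorem baxterNumber_zero : baxterNumber 0 = 1 := by
  norm_num [baxterNumber, baxterSummand]

theorem baxterNumber_one : baxterNumber 1 = 2 := by
  norm_num [baxterNumber, baxterSummand, Finset.sum_range_succ, Nat.choose]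

theorem card_vicious_three_eq_baxterNumber (n : ℕ) :
    (Nat.card {y : Fin 3 → ℕ → ℤ // Vicious 3 n y} : ℚ) = baxterNumber n := by
  rw [card_vicious_eq_sum_prod 2]
  refine Finset.sum_congr rfl fun k _ => ?_
  simp [Finset.prod_range_succ, baxterSummand]

/-! ### Cauchy–Euler operators -/

section EulerOperator

variable {R : Type*} [CommRing R]

/-- The Cauchy–Euler operator `f ↦ a x² f'' + b x f' + c f`. It acts on the power `xⁿ` as the
scalar `a n (n - 1) + b n + c`, so that it turns recurrences into differential equations. -/
noncomputable def eulerOperator (a b c : R) (f : R⟦X⟧) : R⟦X⟧ :=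
  C a * (X ^ 2 * derivative R (derivative R f)) + C b * (X * derivative R f) + C c * f

theorem coeff_X_mul_derivative (f : R⟦X⟧) (n : ℕ) :
    coeff n (X * derivative R f) = n * coeff n f := by
  cases n with
  | zero => simp
  | succ n => rw [coeff_succ_X_mul, coeff_derivative, mul_comm, Nat.cast_succ]

theorem coeff_X_sq_mul_derivative_derivative (f : R⟦X⟧) (n : ℕ) :
    coeff n (X ^ 2 * derivative R (derivative R f)) = n * (n - 1) * coeff n f := by
  cases n with
  | zero => simp
  | succ n =>
    rw [sq, mul_assoc, coeff_succ_X_mul, coeff_X_mul_derivative, coeff_derivative]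
    push_cast
    ring

theorem coeff_eulerOperator (a b c : R) (f : R⟦X⟧) (n : ℕ) :
    coeff n (eulerOperator a b c f) = (a * (n * (n - 1)) + b * n + c) * coeff n f := by
  simp only [eulerOperator, map_add, coeff_C_mul, coeff_X_mul_derivative,
    coeff_X_sq_mul_derivative_derivative]
  ring

end EulerOperator

theorem eulerOperator_mk_baxterNumber :
    eulerOperator 1 8 12 (mk baxterNumber) - X * eulerOperator 7 42 40 (mk baxterNumber) -
      X ^ 2 * eulerOperator 8 32 16 (mk baxterNumber) = C 12 := by
  ext n
  rw [pow_two, mul_assoc, map_sub, map_sub, coeff_C]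
  rcases n with _ | _ | n
  · simp [coeff_eulerOperator, baxterNumber_zero]
  · norm_num [coeff_eulerOperator, coeff_succ_X_mul, baxterNumber_zero, baxterNumber_one]
  · simp only [coeff_succ_X_mul, coeff_eulerOperator, coeff_mk]
    push_cast
    linear_combination baxterNumber_recurrence n

/-- The vicious 3-watermelon generating function `V₃(x)` satisfies
`x²(1+x)(1-8x) V₃'' + x(8-42x-32x²) V₃' + (12-40x-16x²) V₃ = 12`. -/
theorem vicious3_ode :
    let V : ℚ⟦X⟧ := PowerSeries.mk fun n =>
      (Nat.card {y : Fin 3 → ℕ → ℤ // Vicious 3 n y} : ℚ)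
    X ^ 2 * (1 + X) * (1 - 8 * X) * (derivative ℚ (derivative ℚ V)) +
      X * (8 - 42 * X - 32 * X ^ 2) * (derivative ℚ V) +
      (12 - 40 * X - 16 * X ^ 2) * V = 12 := by
  intro V
  have hV : V = mk baxterNumber := congrArg mk (funext card_vicious_three_eq_baxterNumber)
  have hode := eulerOperator_mk_baxterNumber
  simp only [← hV, eulerOperator, map_ofNat, map_one] at hode
  linear_combination hode
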